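/- (q-Taylor coefficients) Let 0<q<1, a,c∈ℂ with a≠0, c≠0, n∈ℤ_{≥0}, and let f(x) := Σ_{k=0}^n c_k (qax/c;q)_k with c_0,…,c_n∈ℂ. Then for every k with 0≤k≤n, the k-fold backward q-derivative satisfies ((D_q^-)^k f)(c/(q^{k+1}a)) = c_k (-1)^k (qa/c)^k q^{k(k-1)/2} (q;q)_k/(1-q)^k. -/

import Mathlib

/-!
Put `b = qa/c`. The telescoping identity `(y;q)_m - (qy;q)_m = -y (1 - q^m) (qy;q)_{m-1}`
(`qp_sub_qp`) shows that, away from `0`, the backward q-derivative sends `(b q^k x;q)_m` to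
`-b q^k (1 - q^m)/(1 - q) * (b q^{k+1} x;q)_{m-1}`. Iterating, `(D_q^-)^k` sends `(bx;q)_j` to a
constant `taylorCoeff q b k j` times `(b q^k x;q)_{j-k}` (`iterate_DqM`). At `x = c/(q^{k+1}a)`
the argument `b q^k x` equals `1`, so the terms with `j > k` vanish; for `j < k` the constant
contains the factor `1 - q^0 = 0`. Only the term `j = k` survives.
-/

noncomputable section

/-- The finite q-shifted factorial `(a;q)_k`. -/
def qp (q a : ℂ) (k : ℕ) : ℂ := ∏ j ∈ Finset.range k, (1 - a * q ^ j)

/-- The backward q-derivative `(D_q^- f)(z) = (f(z)-f(qz))/((1-q)z)`. -/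
def DqM (q : ℝ) (f : ℂ → ℂ) (z : ℂ) : ℂ := (f z - f ((q : ℂ) * z)) / ((1 - (q : ℂ)) * z)

/-- The constant `∏_{i<k} (-b q^i (1 - q^{j-i})/(1-q))` produced by applying the backward
q-derivative `k` times to `(bx;q)_j`. The subtraction `j - i` is truncated; this is harmless since
for `j < k` the factor `i = j` already makes the product vanish. -/
def taylorCoeff (q b : ℂ) (k j : ℕ) : ℂ :=
  ∏ i ∈ Finset.range k, (-(b * q ^ i) * (1 - q ^ (j - i)) / (1 - q))

/-- For `m = 0` both sides vanish, so the truncated `m - 1` is harmless. -/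
lemma qp_sub_qp (q y : ℂ) (m : ℕ) :
    qp q y m - qp q (q * y) m = -y * (1 - q ^ m) * qp q (q * y) (m - 1) := by
  cases m with
  | zero => simp [qp]
  | succ m =>
    have h1 : qp q y (m + 1) = (1 - y) * qp q (q * y) m := by
      unfold qp
      rw [Finset.prod_range_succ', mul_comm]
      congr 1
      · simp
      · exact Finset.prod_congr rfl fun i _ => by ring
    have h2 : qp q (q * y) (m + 1) = qp q (q * y) m * (1 - q * y * q ^ m) := by
      unfold qp
      rw [Finset.prod_range_succ]
    rw [h1, h2, Nat.add_sub_cancel]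
    ring

/-- The restriction `x ≠ 0` is needed because `DqM` takes the junk value `0` at `0`. -/
lemma iterate_DqM (q : ℝ) (hq0 : 0 < q) (hq1 : q < 1) (b : ℂ) (s : Finset ℕ) (co : ℕ → ℂ)
    (k : ℕ) : ∀ x : ℂ, x ≠ 0 →
      (DqM q)^[k] (fun x : ℂ => ∑ j ∈ s, co j * qp (q : ℂ) (b * x) j) x =
        ∑ j ∈ s, co j * taylorCoeff q b k j * qp (q : ℂ) (b * (q : ℂ) ^ k * x) (j - k) := by
  have hq : (q : ℂ) ≠ 0 := by exact_mod_cast hq0.ne'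
  have hq' : (1 : ℂ) - q ≠ 0 := sub_ne_zero.2 (by exact_mod_cast hq1.ne')
  induction k with
  | zero => intro x _; simp [taylorCoeff]
  | succ k ih =>
    intro x hx
    rw [Function.iterate_succ_apply', DqM, ih x hx, ih _ (mul_ne_zero hq hx),
      ← Finset.sum_sub_distrib, Finset.sum_div]
    refine Finset.sum_congr rfl fun j _ => ?_
    have key := qp_sub_qp (q : ℂ) (b * (q : ℂ) ^ k * x) (j - k)
    have e1 : b * (q : ℂ) ^ k * (q * x) = q * (b * (q : ℂ) ^ k * x) := by ring
    have e2 : b * (q : ℂ) ^ (k + 1) * x = q * (b * (q : ℂ) ^ k * x) := by ring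
    have e3 : taylorCoeff q b (k + 1) j =
        taylorCoeff q b k j * (-(b * (q : ℂ) ^ k) * (1 - (q : ℂ) ^ (j - k)) / (1 - q)) := by
      unfold taylorCoeff
      rw [Finset.prod_range_succ]
    rw [e1, e2, e3, ← mul_sub, key, Nat.sub_sub]
    field_simp

lemma taylorCoeff_of_lt (q b : ℂ) {k j : ℕ} (h : j < k) : taylorCoeff q b k j = 0 :=
  Finset.prod_eq_zero (Finset.mem_range.2 h) (by simp)

lemma taylorCoeff_self (q b : ℂ) (k : ℕ) :
    taylorCoeff q b k k =
      (-1) ^ k * b ^ k * q ^ (k * (k - 1) / 2) * qp q q k / (1 - q) ^ k := by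
  have h : qp q q k = ∏ i ∈ Finset.range k, (1 - q ^ (k - i)) := by
    unfold qp
    rw [← Finset.prod_range_reflect]
    refine Finset.prod_congr rfl fun i hi => ?_
    have := Finset.mem_range.1 hi
    rw [← pow_succ', show k - 1 - i + 1 = k - i by lia]
  rw [h, ← Finset.sum_range_id, ← Finset.prod_pow_eq_pow_sum]
  simp only [taylorCoeff, Finset.prod_div_distrib, Finset.prod_mul_distrib, Finset.prod_const,
    Finset.card_range, neg_mul, Finset.prod_neg]
  ring

lemma qp_one_of_pos (q : ℂ) {m : ℕ} (h : 0 < m) : qp q 1 m = 0 :=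
  Finset.prod_eq_zero (Finset.mem_range.2 h) (by simp)

/-- q-Taylor coefficients: if `f(x) = Σ_{k=0}^n c_k (qax/c;q)_k` then for `0 ≤ k ≤ n`
`((D_q^-)^k f)(c/(q^{k+1}a)) = c_k (-1)^k (qa/c)^k q^{k(k-1)/2} (q;q)_k/(1-q)^k`. -/
theorem stmt16 (q : ℝ) (hq0 : 0 < q) (hq1 : q < 1) (a c : ℂ)
    (ha : a ≠ 0) (hc : c ≠ 0) (n : ℕ) (co : ℕ → ℂ) :
    ∀ k : ℕ, k ≤ n →
      (DqM q)^[k]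
          (fun x : ℂ => ∑ j ∈ Finset.range (n + 1), co j * qp (q : ℂ) ((q : ℂ) * a * x / c) j)
          (c / ((q : ℂ) ^ (k + 1) * a)) =
        co k * (-1) ^ k * ((q : ℂ) * a / c) ^ k * (q : ℂ) ^ (k * (k - 1) / 2) *
          qp (q : ℂ) (q : ℂ) k / (1 - (q : ℂ)) ^ k := by
  intro k hk
  have hq : (q : ℂ) ≠ 0 := by exact_mod_cast hq0.ne'
  have hx : c / ((q : ℂ) ^ (k + 1) * a) ≠ 0 := by positivity
  have hfun : (fun x : ℂ => ∑ j ∈ Finset.range (n + 1),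
        co j * qp (q : ℂ) ((q : ℂ) * a * x / c) j) =
      fun x : ℂ => ∑ j ∈ Finset.range (n + 1), co j * qp (q : ℂ) ((q : ℂ) * a / c * x) j := by
    funext x
    rw [mul_div_right_comm]
  have hone : (q : ℂ) * a / c * (q : ℂ) ^ k * (c / ((q : ℂ) ^ (k + 1) * a)) = 1 := by
    field_simp
    ring
  rw [hfun, iterate_DqM q hq0 hq1 _ _ _ k _ hx, hone, Finset.sum_eq_single k]
  · rw [taylorCoeff_self, Nat.sub_self, show qp (q : ℂ) 1 0 = 1 by simp [qp]]
    ring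
  · intro j _ hjk
    rcases lt_or_gt_of_ne hjk with h | h
    · rw [taylorCoeff_of_lt _ _ h]
      ring
    · rw [qp_one_of_pos _ (Nat.sub_pos_of_lt h), mul_zero]
  · intro h
    exact absurd (Finset.mem_range.2 (Nat.lt_succ_of_le hk)) h
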